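/- There exists an absolute constant $C>0$ such that the following holds. Let $\gamma\in(1/2,1]$, $\lambda\ge1$ and $N\ge1$ with $\lambda\ge N$. For $n=(n_1,n_2)\in\mathbb{Z}^2$ set $\kappa(n)=(n_1/\lambda,\;n_2/(\gamma\lambda))\in\mathbb{R}^2$. Let $a:\mathbb{Z}^2\to\mathbb{C}$ be finitely supported with $a(n)=0$ unless $|\kappa(n)|\le N$, and set $u(t,x)=\sum_{n\in\mathbb{Z}^2}a(n)\,e^{i(\kappa(n)\cdot x-|\kappa(n)|^2t)}$ for $x\in\mathbb{R}^2$. Then $\Big(\int_0^{1}\int_0^{2\pi\gamma\lambda}\int_0^{2\pi\lambda}|u(t,x)|^4\,dx_1\,dx_2\,dt\Big)^{1/4}\le C\Big(\int_0^{2\pi\gamma\lambda}\int_0^{2\pi\lambda}|u(0,x)|^2\,dx_1\,dx_2\Big)^{1/2}$, with $C$ independent of $\gamma$, $\lambda$ and $N$. -/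

import Mathlib

open MeasureTheory Real

/-!
Write `κ(n) = (n₁ / L, n₂ / M)` for the frequencies on the torus with periods `2πL`, `2πM`. By
Plancherel in `x`, the integral of `|u|⁴ = |u²|²` over a period cell is the cell area times
`∑ₖ |Uₖ(t)|²`, where the Fourier coefficient `Uₖ` of `u²` is a trigonometric polynomial in `t` with
the frequencies `|κ(n)|² + |κ(k - n)|² = 2 |κ(n) - κ(k) / 2|² + |κ(k)|² / 2`. On `[0, 1]` we have
`1 ≤ e · exp (-|t|)`, and the Fourier transform of `exp (-|t|)` is the positive function
`2 / (1 + θ²)`; Schur's test therefore bounds `∫ |Uₖ|²` by the squares of the coefficients times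
`sup_τ ∑ₙ (1 + (2 |κ(n) - κ(k) / 2|² - τ)²)⁻¹`.

Since all frequencies have size `≲ L, M`, the function `|ξ|²` varies by `O(1)` on a cell of the
frequency lattice, which has area `1 / (L M)`. The lattice sum is thus at most a constant times
`L M ∫ (1 + (2 |ξ|² - τ)²)⁻¹ dξ`, and in polar coordinates this integral is at most `π² / 2` for
every `τ`. The factor `L M` is absorbed by `‖u(0)‖₂⁴ = (4π² L M ∑ |a(n)|²)²`.
-/

section LargeSieve

theorem integrable_cexp_mul_exp_neg_abs (θ : ℝ) :
    Integrable fun t : ℝ => Complex.exp (-(Complex.I * θ * t)) * (exp (-|t|) : ℝ) := by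
  have h_abs : Integrable fun t : ℝ => exp (-|t|) := by
    refine integrableOn_univ.1 (Set.Iic_union_Ioi (a := (0 : ℝ)) ▸ IntegrableOn.union ?_ ?_)
    · refine (integrableOn_exp_Iic 0).congr_fun (fun t ht => ?_) measurableSet_Iic
      simp only [abs_of_nonpos (Set.mem_Iic.1 ht), neg_neg]
    · refine (integrableOn_exp_neg_Ioi 0).congr_fun (fun t ht => ?_) measurableSet_Ioi
      simp only [abs_of_pos (Set.mem_Ioi.1 ht)]
  refine h_abs.mono' (by fun_prop) (.of_forall fun t => ?_)
  simp [Complex.norm_exp]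

theorem integral_cexp_mul_exp_neg_abs (θ : ℝ) :
    ∫ t : ℝ, Complex.exp (-(Complex.I * θ * t)) * (exp (-|t|) : ℝ) =
      ((2 * (1 + θ ^ 2)⁻¹ : ℝ) : ℂ) := by
  have h_neg : ∫ t in Set.Iic (0 : ℝ), Complex.exp (-(Complex.I * θ * t)) * (exp (-|t|) : ℝ) =
      1 / (1 - Complex.I * θ) := by
    calc _ = ∫ t : ℝ in Set.Iic 0, Complex.exp ((1 - Complex.I * θ) * t) := by
          refine setIntegral_congr_fun measurableSet_Iic fun t ht => ?_
          simp only [abs_of_nonpos (Set.mem_Iic.1 ht), neg_neg, Complex.ofReal_exp,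
            ← Complex.exp_add]
          ring_nf
      _ = 1 / (1 - Complex.I * θ) := by
          rw [integral_exp_mul_complex_Iic (by simp), Complex.ofReal_zero, mul_zero,
            Complex.exp_zero]
  have h_pos : ∫ t in Set.Ioi (0 : ℝ), Complex.exp (-(Complex.I * θ * t)) * (exp (-|t|) : ℝ) =
      -1 / (-1 - Complex.I * θ) := by
    calc _ = ∫ t : ℝ in Set.Ioi 0, Complex.exp ((-1 - Complex.I * θ) * t) := by
          refine setIntegral_congr_fun measurableSet_Ioi fun t ht => ?_
          simp only [abs_of_pos (Set.mem_Ioi.1 ht), Complex.ofReal_exp, Complex.ofReal_neg,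
            ← Complex.exp_add]
          ring_nf
      _ = -1 / (-1 - Complex.I * θ) := by
          rw [integral_exp_mul_complex_Ioi (by simp), Complex.ofReal_zero, mul_zero,
            Complex.exp_zero]
  have h_int := integrable_cexp_mul_exp_neg_abs θ
  rw [← intervalIntegral.integral_Iic_add_Ioi h_int.integrableOn h_int.integrableOn, h_neg, h_pos]
  have h₁ : (1 - Complex.I * θ : ℂ) ≠ 0 := fun h => by simpa using congrArg Complex.re h
  have h₂ : (-1 - Complex.I * θ : ℂ) ≠ 0 := fun h => by simpa using congrArg Complex.re h
  have h₃ : (1 + θ ^ 2 : ℂ) ≠ 0 := mod_cast (by positivity : (1 + θ ^ 2 : ℝ) ≠ 0)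
  push_cast
  field_simp
  linear_combination -2 * (θ : ℂ) ^ 2 * Complex.I_sq

theorem sum_mul_mul_le_of_symm_of_rowSum_le {ι : Type*} (T : Finset ι) {W : ι → ι → ℝ}
    (f : ι → ℝ) {K : ℝ} (hW : ∀ i j, 0 ≤ W i j) (hW_symm : ∀ i j, W i j = W j i)
    (hK : ∀ i ∈ T, ∑ j ∈ T, W i j ≤ K) :
    ∑ i ∈ T, ∑ j ∈ T, f i * f j * W i j ≤ K * ∑ i ∈ T, f i ^ 2 := by
  have h_swap : ∑ i ∈ T, ∑ j ∈ T, f j ^ 2 * W i j = ∑ i ∈ T, ∑ j ∈ T, f i ^ 2 * W i j := by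
    rw [Finset.sum_comm]
    simp_rw [hW_symm]
  calc ∑ i ∈ T, ∑ j ∈ T, f i * f j * W i j
      ≤ ∑ i ∈ T, ∑ j ∈ T, (f i ^ 2 * W i j + f j ^ 2 * W i j) / 2 := by
        gcongr with i _ j _
        nlinarith [mul_nonneg (hW i j) (sq_nonneg (f i - f j))]
    _ = ∑ i ∈ T, ∑ j ∈ T, f i ^ 2 * W i j := by
        simp_rw [← Finset.sum_div, Finset.sum_add_distrib]
        rw [h_swap, add_self_div_two]
    _ ≤ ∑ i ∈ T, f i ^ 2 * K := by
        simp_rw [← Finset.mul_sum]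
        gcongr with i hi
        exact hK i hi
    _ = K * ∑ i ∈ T, f i ^ 2 := by rw [← Finset.sum_mul, mul_comm]

variable {ι : Type*} (T : Finset ι) (c : ι → ℂ) (θ : ι → ℝ)

theorem norm_sq_sum_mul_cexp_mul_exp_neg_abs (t : ℝ) :
    ((‖∑ i ∈ T, c i * Complex.exp (-(Complex.I * θ i * t))‖ ^ 2 * exp (-|t|) : ℝ) : ℂ) =
      ∑ i ∈ T, ∑ j ∈ T, c i * starRingEnd ℂ (c j) *
        (Complex.exp (-(Complex.I * (θ i - θ j : ℝ) * t)) * (exp (-|t|) : ℝ)) := by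
  rw [Complex.ofReal_mul, Complex.ofReal_pow, ← Complex.mul_conj', map_sum, Finset.sum_mul_sum]
  simp_rw [Finset.sum_mul]
  refine Finset.sum_congr rfl fun i _ => Finset.sum_congr rfl fun j _ => ?_
  have h_exp : Complex.exp (-(Complex.I * (θ i - θ j : ℝ) * t)) =
      Complex.exp (-(Complex.I * θ i * t)) *
        starRingEnd ℂ (Complex.exp (-(Complex.I * θ j * t))) := by
    rw [← Complex.exp_conj, ← Complex.exp_add]
    congr 1
    simp only [map_neg, map_mul, Complex.conj_I, Complex.conj_ofReal, Complex.ofReal_sub]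
    ring
  rw [h_exp, map_mul]
  ring

theorem integrable_norm_sq_sum_mul_exp_neg_abs :
    Integrable fun t : ℝ =>
      ‖∑ i ∈ T, c i * Complex.exp (-(Complex.I * θ i * t))‖ ^ 2 * exp (-|t|) := by
  have h_complex : Integrable fun t : ℝ =>
      ((‖∑ i ∈ T, c i * Complex.exp (-(Complex.I * θ i * t))‖ ^ 2 * exp (-|t|) : ℝ) : ℂ) := by
    simp_rw [norm_sq_sum_mul_cexp_mul_exp_neg_abs]
    exact integrable_finsetSum T fun i _ => integrable_finsetSum T fun j _ =>
      (integrable_cexp_mul_exp_neg_abs (θ i - θ j)).const_mul (c i * starRingEnd ℂ (c j))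
  exact h_complex.re

theorem integral_norm_sq_sum_mul_exp_neg_abs_le :
    ∫ t : ℝ, ‖∑ i ∈ T, c i * Complex.exp (-(Complex.I * θ i * t))‖ ^ 2 * exp (-|t|) ≤
      ∑ i ∈ T, ∑ j ∈ T, ‖c i‖ * ‖c j‖ * (2 * (1 + (θ i - θ j) ^ 2)⁻¹) := by
  have h_term (i j : ι) := (integrable_cexp_mul_exp_neg_abs (θ i - θ j)).const_mul
    (c i * starRingEnd ℂ (c j))
  have h_eq : ((∫ t : ℝ, ‖∑ i ∈ T, c i * Complex.exp (-(Complex.I * θ i * t))‖ ^ 2 *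
      exp (-|t|) : ℝ) : ℂ) =
      ∑ i ∈ T, ∑ j ∈ T, c i * starRingEnd ℂ (c j) * (2 * (1 + (θ i - θ j) ^ 2)⁻¹ : ℝ) := by
    rw [← integral_complex_ofReal]
    simp_rw [norm_sq_sum_mul_cexp_mul_exp_neg_abs]
    rw [integral_finsetSum T fun i _ => integrable_finsetSum T fun j _ => h_term i j]
    simp_rw [integral_finsetSum T fun j _ => h_term _ j, integral_const_mul,
      integral_cexp_mul_exp_neg_abs]
  refine (le_abs_self _).trans ?_
  rw [← Real.norm_eq_abs, ← Complex.norm_real, h_eq]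
  refine (norm_sum_le _ _).trans (Finset.sum_le_sum fun i _ => (norm_sum_le _ _).trans_eq ?_)
  refine Finset.sum_congr rfl fun j _ => ?_
  rw [norm_mul, norm_mul, RCLike.norm_conj, Complex.norm_real, Real.norm_of_nonneg (by positivity)]

theorem integral_norm_sq_sum_mul_cexp_le {K : ℝ}
    (hK : ∀ i ∈ T, ∑ j ∈ T, (1 + (θ i - θ j) ^ 2)⁻¹ ≤ K) :
    ∫ t in (0 : ℝ)..1, ‖∑ i ∈ T, c i * Complex.exp (-(Complex.I * θ i * t))‖ ^ 2 ≤
      2 * exp 1 * K * ∑ i ∈ T, ‖c i‖ ^ 2 := by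
  set f : ℝ → ℝ := fun t => ‖∑ i ∈ T, c i * Complex.exp (-(Complex.I * θ i * t))‖ ^ 2
  have h_row : ∀ i ∈ T, ∑ j ∈ T, 2 * (1 + (θ i - θ j) ^ 2)⁻¹ ≤ 2 * K := fun i hi => by
    rw [← Finset.mul_sum]
    gcongr
    exact hK i hi
  calc ∫ t in (0 : ℝ)..1, f t
      ≤ ∫ t in (0 : ℝ)..1, exp 1 * (f t * exp (-|t|)) := by
        refine intervalIntegral.integral_mono_on zero_le_one
          (Continuous.intervalIntegrable (by fun_prop) _ _)
          (Continuous.intervalIntegrable (by fun_prop) _ _) fun t ht => ?_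
        have h_weight : 1 ≤ exp 1 * exp (-|t|) := by
          rw [← exp_add, one_le_exp_iff, abs_of_nonneg ht.1]
          linarith [ht.2]
        nlinarith [sq_nonneg ‖∑ i ∈ T, c i * Complex.exp (-(Complex.I * θ i * t))‖]
    _ ≤ exp 1 * ∫ t, f t * exp (-|t|) := by
        rw [intervalIntegral.integral_const_mul, intervalIntegral.integral_of_le zero_le_one]
        refine mul_le_mul_of_nonneg_left ?_ (exp_pos 1).le
        exact setIntegral_le_integral (integrable_norm_sq_sum_mul_exp_neg_abs T c θ)
          (.of_forall fun t => by positivity)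
    _ ≤ exp 1 * ∑ i ∈ T, ∑ j ∈ T, ‖c i‖ * ‖c j‖ * (2 * (1 + (θ i - θ j) ^ 2)⁻¹) := by
        gcongr
        exact integral_norm_sq_sum_mul_exp_neg_abs_le T c θ
    _ ≤ exp 1 * (2 * K * ∑ i ∈ T, ‖c i‖ ^ 2) := by
        gcongr
        refine sum_mul_mul_le_of_symm_of_rowSum_le T (fun i => ‖c i‖) (fun i j => by positivity)
          (fun i j => ?_) h_row
        rw [sub_sq_comm]
    _ = 2 * exp 1 * K * ∑ i ∈ T, ‖c i‖ ^ 2 := by ring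

end LargeSieve

section LatticeSum

theorem sum_mul_measure_le_lintegral {α ι : Type*} [MeasurableSpace α] {μ : Measure α}
    {S : Finset ι} {cell : ι → Set α} (h_disj : (S : Set ι).PairwiseDisjoint cell)
    (h_meas : ∀ i ∈ S, MeasurableSet (cell i)) {b : ι → ENNReal} {f : α → ENNReal}
    (h_le : ∀ i ∈ S, ∀ x ∈ cell i, b i ≤ f x) :
    ∑ i ∈ S, b i * μ (cell i) ≤ ∫⁻ x, f x ∂μ :=
  calc ∑ i ∈ S, b i * μ (cell i)
      ≤ ∑ i ∈ S, ∫⁻ x in cell i, f x ∂μ := by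
        gcongr with i hi
        rw [← setLIntegral_const]
        exact setLIntegral_mono' (h_meas i hi) (h_le i hi)
    _ = ∫⁻ x in ⋃ i ∈ S, cell i, f x ∂μ := (lintegral_biUnion_finset h_disj h_meas f).symm
    _ ≤ ∫⁻ x, f x ∂μ := setLIntegral_le_lintegral _ _

theorem lintegral_ofReal_mul_comp_sq (f : ℝ → ENNReal) :
    ∫⁻ r in Set.Ioi (0 : ℝ), ENNReal.ofReal (2 * r) * f (r ^ 2) = ∫⁻ s in Set.Ioi (0 : ℝ), f s := by
  have h_image : (fun r : ℝ => r ^ 2) '' Set.Ioi 0 = Set.Ioi 0 := by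
    ext s
    refine ⟨fun ⟨r, hr, hrs⟩ => hrs ▸ pow_pos (Set.mem_Ioi.1 hr) 2, fun hs => ?_⟩
    exact ⟨√s, sqrt_pos.2 hs, sq_sqrt (Set.mem_Ioi.1 hs).le⟩
  have h_inj : Set.InjOn (fun r : ℝ => r ^ 2) (Set.Ioi 0) := fun r hr s hs h =>
    (pow_left_inj₀ (Set.mem_Ioi.1 hr).le (Set.mem_Ioi.1 hs).le two_ne_zero).1 h
  conv_rhs => rw [← h_image]
  rw [lintegral_image_eq_lintegral_abs_deriv_mul measurableSet_Ioi
    (fun r _ => (hasDerivAt_pow 2 r).hasDerivWithinAt) h_inj]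
  refine setLIntegral_congr_fun measurableSet_Ioi fun r hr => ?_
  have hr : 0 < r := hr
  simp [abs_of_pos hr]

theorem lintegral_comp_sq_add_sq {f : ℝ → ENNReal} (hf : Measurable f) :
    ∫⁻ x : ℝ × ℝ, f (x.1 ^ 2 + x.2 ^ 2) =
      ENNReal.ofReal π * ∫⁻ s in Set.Ioi (0 : ℝ), f s := by
  have h_polar (p : ℝ × ℝ) : (polarCoord.symm p).1 ^ 2 + (polarCoord.symm p).2 ^ 2 = p.1 ^ 2 := by
    simp only [polarCoord_symm_apply]
    linear_combination p.1 ^ 2 * cos_sq_add_sin_sq p.2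
  have h_two : ENNReal.ofReal 2 * ∫⁻ r in Set.Ioi (0 : ℝ), ENNReal.ofReal r * f (r ^ 2) =
      ∫⁻ s in Set.Ioi (0 : ℝ), f s := by
    rw [← lintegral_ofReal_mul_comp_sq f, ← lintegral_const_mul _ (by fun_prop)]
    simp_rw [ENNReal.ofReal_mul zero_le_two, mul_assoc]
  rw [← lintegral_comp_polarCoord_symm, polarCoord_target, Measure.volume_eq_prod,
    ← Measure.prod_restrict]
  simp_rw [h_polar, smul_eq_mul]
  rw [lintegral_prod _ (by fun_prop), ← h_two]
  simp only [lintegral_const, Measure.restrict_apply MeasurableSet.univ, Set.univ_inter,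
    Real.volume_Ioo]
  rw [lintegral_mul_const _ (by fun_prop), show π - -π = π * 2 by ring,
    ENNReal.ofReal_mul pi_pos.le]
  ring

theorem lintegral_inv_one_add_sq_two_mul_sub (τ : ℝ) :
    ∫⁻ s : ℝ, ENNReal.ofReal (1 + (2 * s - τ) ^ 2)⁻¹ = ENNReal.ofReal (π / 2) := by
  have h_int : Integrable fun s : ℝ => (1 + (2 * s - τ) ^ 2)⁻¹ :=
    (integrable_inv_one_add_sq.comp_sub_right τ).comp_mul_left' two_ne_zero
  rw [← ofReal_integral_eq_lintegral_ofReal h_int (.of_forall fun s => by positivity),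
    Measure.integral_comp_mul_left (fun s => (1 + (s - τ) ^ 2)⁻¹) 2,
    integral_sub_right_eq_self (fun s : ℝ => (1 + s ^ 2)⁻¹) τ, integral_univ_inv_one_add_sq,
    abs_of_pos (by norm_num), smul_eq_mul, inv_mul_eq_div]

theorem lintegral_inv_one_add_sq_paraboloid_le (τ : ℝ) :
    ∫⁻ x : ℝ × ℝ, ENNReal.ofReal (1 + (2 * (x.1 ^ 2 + x.2 ^ 2) - τ) ^ 2)⁻¹ ≤
      ENNReal.ofReal (π ^ 2 / 2) := by
  rw [lintegral_comp_sq_add_sq (f := fun s => ENNReal.ofReal (1 + (2 * s - τ) ^ 2)⁻¹)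
    (by fun_prop)]
  calc _ ≤ ENNReal.ofReal π * ENNReal.ofReal (π / 2) := by
        gcongr
        exact (setLIntegral_le_lintegral _ _).trans_eq (lintegral_inv_one_add_sq_two_mul_sub τ)
    _ = ENNReal.ofReal (π ^ 2 / 2) := by
        rw [← ENNReal.ofReal_mul pi_pos.le]
        ring_nf

theorem inv_one_add_sq_le_of_abs_sub_le {s s' B : ℝ} (h : |s' - s| ≤ B) :
    (1 + s ^ 2)⁻¹ ≤ 2 * (1 + B ^ 2) * (1 + s' ^ 2)⁻¹ := by
  have h_sq : (s' - s) ^ 2 ≤ B ^ 2 := sq_le_sq' (abs_le.1 h).1 (abs_le.1 h).2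
  rw [← div_eq_mul_inv, le_div_iff₀ (by positivity), inv_mul_le_iff₀ (by positivity)]
  calc 1 + s' ^ 2 ≤ 2 * (1 + (s' - s) ^ 2) * (1 + s ^ 2) := by
        nlinarith [sq_nonneg (s' - 2 * s), mul_nonneg (sq_nonneg (s' - s)) (sq_nonneg s)]
    _ ≤ (1 + s ^ 2) * (2 * (1 + B ^ 2)) := by
        rw [mul_comm]
        gcongr

theorem abs_sq_sub_sq_le_of_mem_Ico {R K p q x : ℝ} (hR : 0 < R) (hKR : 1 ≤ K * R)
    (hp : |p| ≤ K * R) (hpq : q - p = 1 / R) (hx : x ∈ Set.Ico p q) :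
    |x ^ 2 - p ^ 2| ≤ K ^ 2 + 2 * K := by
  have h_dist : |x - p| ≤ 1 / R := by
    rw [abs_of_nonneg (sub_nonneg.2 hx.1)]
    linarith [hx.2]
  calc |x ^ 2 - p ^ 2| = |(x - p) ^ 2 + 2 * (p * (x - p))| := by ring_nf
    _ ≤ |x - p| ^ 2 + 2 * (|p| * |x - p|) := by
        refine (abs_add_le _ _).trans_eq ?_
        rw [abs_pow, abs_mul, abs_mul, abs_two]
    _ ≤ (1 / R) ^ 2 + 2 * (K * R * (1 / R)) := by gcongr
    _ ≤ K ^ 2 + 2 * K := by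
        rw [mul_assoc K, mul_one_div_cancel hR.ne', mul_one]
        gcongr
        exact (div_le_iff₀ hR).2 hKR

/-- The half-open cell of side lengths `1 / L` and `1 / M` whose lower left corner is the point
`(n₁ / L, n₂ / M)` of the frequency lattice, translated by `-c`. -/
def latticeCell (L M : ℝ) (c : ℝ × ℝ) (n : ℤ × ℤ) : Set (ℝ × ℝ) :=
  Set.Ico (n.1 / L - c.1) ((n.1 + 1) / L - c.1) ×ˢ Set.Ico (n.2 / M - c.2) ((n.2 + 1) / M - c.2)

variable {L M : ℝ}

theorem pairwise_disjoint_latticeCell (L M : ℝ) (c : ℝ × ℝ) :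
    Pairwise (Function.onFun Disjoint (latticeCell L M c)) := by
  have h_Ico (R d : ℝ) {k l : ℤ} (hkl : k ≠ l) :
      Disjoint (Set.Ico (k / R - d) ((k + 1) / R - d)) (Set.Ico (l / R - d) ((l + 1) / R - d)) := by
    simpa [Function.onFun, zsmul_eq_mul, neg_add_eq_sub, div_eq_mul_inv] using
      Set.pairwise_disjoint_Ico_add_zsmul (-d) R⁻¹ hkl
  intro n m hnm
  rw [Function.onFun, latticeCell, latticeCell, Set.disjoint_prod]
  by_cases h : n.1 = m.1
  · exact .inr (h_Ico M c.2 fun h' => hnm (Prod.ext h h'))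
  · exact .inl (h_Ico L c.1 h)

theorem measurableSet_latticeCell (L M : ℝ) (c : ℝ × ℝ) (n : ℤ × ℤ) :
    MeasurableSet (latticeCell L M c n) :=
  measurableSet_Ico.prod measurableSet_Ico

theorem volume_latticeCell (hL : 0 < L) (c : ℝ × ℝ) (n : ℤ × ℤ) :
    volume (latticeCell L M c n) = ENNReal.ofReal (L * M)⁻¹ := by
  rw [latticeCell, Measure.volume_eq_prod, Measure.prod_prod, Real.volume_Ico, Real.volume_Ico,
    sub_sub_sub_cancel_right, sub_sub_sub_cancel_right, ← sub_div, ← sub_div,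
    add_sub_cancel_left, add_sub_cancel_left, ← ENNReal.ofReal_mul (by positivity)]
  congr 1
  ring

theorem inv_one_add_sq_le_of_mem_latticeCell (hL : 0 < L) (hM : 0 < M) {K : ℝ}
    (hKL : 1 ≤ K * L) (hKM : 1 ≤ K * M) {n : ℤ × ℤ} {c x : ℝ × ℝ}
    (hn₁ : |n.1 / L - c.1| ≤ K * L) (hn₂ : |n.2 / M - c.2| ≤ K * M)
    (hx : x ∈ latticeCell L M c n) (τ : ℝ) :
    (1 + (2 * ((n.1 / L - c.1) ^ 2 + (n.2 / M - c.2) ^ 2) - τ) ^ 2)⁻¹ ≤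
      2 * (1 + (4 * (K ^ 2 + 2 * K)) ^ 2) *
        (1 + (2 * (x.1 ^ 2 + x.2 ^ 2) - τ) ^ 2)⁻¹ := by
  have h₁ := abs_le.1 (abs_sq_sub_sq_le_of_mem_Ico hL hKL hn₁ (by ring) hx.1)
  have h₂ := abs_le.1 (abs_sq_sub_sq_le_of_mem_Ico hM hKM hn₂ (by ring) hx.2)
  refine inv_one_add_sq_le_of_abs_sub_le (abs_le.2 ⟨?_, ?_⟩) <;>
    linarith [h₁.1, h₁.2, h₂.1, h₂.2]

theorem sum_lattice_inv_one_add_sq_le (hL : 0 < L) (hM : 0 < M) {K : ℝ} (hKL : 1 ≤ K * L)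
    (hKM : 1 ≤ K * M) {S : Finset (ℤ × ℤ)} {c : ℝ × ℝ}
    (hS : ∀ n ∈ S, |n.1 / L - c.1| ≤ K * L ∧ |n.2 / M - c.2| ≤ K * M) (τ : ℝ) :
    ∑ n ∈ S, (1 + (2 * ((n.1 / L - c.1) ^ 2 + (n.2 / M - c.2) ^ 2) - τ) ^ 2)⁻¹ ≤
      π ^ 2 * (1 + (4 * (K ^ 2 + 2 * K)) ^ 2) * (L * M) := by
  set A : ℝ := 1 + (4 * (K ^ 2 + 2 * K)) ^ 2
  set b : ℤ × ℤ → ℝ := fun n => (1 + (2 * ((n.1 / L - c.1) ^ 2 + (n.2 / M - c.2) ^ 2) - τ) ^ 2)⁻¹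
  have h_cell : ∀ n ∈ S, ∀ x ∈ latticeCell L M c n, ENNReal.ofReal (b n) ≤
      ENNReal.ofReal (2 * A) * ENNReal.ofReal (1 + (2 * (x.1 ^ 2 + x.2 ^ 2) - τ) ^ 2)⁻¹ := by
    intro n hn x hx
    rw [← ENNReal.ofReal_mul (by positivity)]
    exact ENNReal.ofReal_le_ofReal
      (inv_one_add_sq_le_of_mem_latticeCell hL hM hKL hKM (hS n hn).1 (hS n hn).2 hx τ)
  have h_sum : ENNReal.ofReal (∑ n ∈ S, b n * (L * M)⁻¹) ≤
      ENNReal.ofReal (2 * A * (π ^ 2 / 2)) :=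
    calc ENNReal.ofReal (∑ n ∈ S, b n * (L * M)⁻¹)
        = ∑ n ∈ S, ENNReal.ofReal (b n) * volume (latticeCell L M c n) := by
          rw [ENNReal.ofReal_sum_of_nonneg fun n _ => by positivity]
          refine Finset.sum_congr rfl fun n _ => ?_
          rw [volume_latticeCell hL, ENNReal.ofReal_mul (by positivity)]
      _ ≤ ∫⁻ x : ℝ × ℝ, ENNReal.ofReal (2 * A) *
            ENNReal.ofReal (1 + (2 * (x.1 ^ 2 + x.2 ^ 2) - τ) ^ 2)⁻¹ :=
          sum_mul_measure_le_lintegral ((pairwise_disjoint_latticeCell L M c).set_pairwise _)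
            (fun n _ => measurableSet_latticeCell L M c n) h_cell
      _ ≤ ENNReal.ofReal (2 * A * (π ^ 2 / 2)) := by
          rw [lintegral_const_mul _ (by fun_prop),
            ENNReal.ofReal_mul (p := 2 * A) (by positivity)]
          gcongr
          exact lintegral_inv_one_add_sq_paraboloid_le τ
  rw [ENNReal.ofReal_le_ofReal_iff (by positivity), ← Finset.sum_mul, ← div_eq_mul_inv,
    div_le_iff₀ (by positivity)] at h_sum
  linarith

end LatticeSum

section Torus

/-- The character `x ↦ exp (i κ(n) · x)` of frequency `κ(n) = (n₁ / L, n₂ / M)` on the torus with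
periods `2πL` and `2πM`. -/
noncomputable def torusChar (L M : ℝ) (n : ℤ × ℤ) (x₁ x₂ : ℝ) : ℂ :=
  Complex.exp (Complex.I * (n.1 * x₁ / L + n.2 * x₂ / M))

/-- The symbol `|κ(n)|²` of `-Δ` on the torus with periods `2πL` and `2πM`. -/
noncomputable def torusSymbol (L M : ℝ) (n : ℤ × ℤ) : ℝ :=
  (n.1 / L) ^ 2 + (n.2 / M) ^ 2

/-- The free Schrödinger evolution on the torus with periods `2πL` and `2πM` of the trigonometric
polynomial with coefficients `a`. -/
noncomputable def freeWave (L M : ℝ) (a : ℤ × ℤ →₀ ℂ) (t x₁ x₂ : ℝ) : ℂ :=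
  ∑ n ∈ a.support,
    a n * Complex.exp (-(Complex.I * torusSymbol L M n * t)) * torusChar L M n x₁ x₂

/-- The Fourier coefficient at frequency `k` of the square of a free wave; as a function of time it
is a trigonometric polynomial with one term for each pair of frequencies with sum `k`. -/
noncomputable def freeWaveSqCoeff (L M : ℝ) (a : ℤ × ℤ →₀ ℂ) (k : ℤ × ℤ) (t : ℝ) : ℂ :=
  ∑ P ∈ a.support ×ˢ a.support with P.1 + P.2 = k, a P.1 * a P.2 *
    Complex.exp (-(Complex.I * (torusSymbol L M P.1 + torusSymbol L M P.2 : ℝ) * t))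

variable {L M : ℝ}

theorem torusChar_zero (L M x₁ x₂ : ℝ) : torusChar L M 0 x₁ x₂ = 1 := by
  simp [torusChar]

theorem torusChar_add (L M : ℝ) (k l : ℤ × ℤ) (x₁ x₂ : ℝ) :
    torusChar L M (k + l) x₁ x₂ = torusChar L M k x₁ x₂ * torusChar L M l x₁ x₂ := by
  rw [torusChar, torusChar, torusChar, ← Complex.exp_add]
  congr 1
  simp only [Prod.fst_add, Prod.snd_add, Int.cast_add]
  ring

theorem torusChar_mul_conj (L M : ℝ) (k l : ℤ × ℤ) (x₁ x₂ : ℝ) :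
    torusChar L M k x₁ x₂ * starRingEnd ℂ (torusChar L M l x₁ x₂) =
      torusChar L M (k - l) x₁ x₂ := by
  rw [torusChar, torusChar, torusChar, ← Complex.exp_conj, ← Complex.exp_add]
  congr 1
  simp only [map_mul, map_add, map_div₀, Complex.conj_I, Complex.conj_ofReal, map_intCast,
    Prod.fst_sub, Prod.snd_sub, Int.cast_sub]
  ring

theorem continuous_torusChar (L M : ℝ) (n : ℤ × ℤ) :
    Continuous (Function.uncurry (torusChar L M n)) := by
  unfold torusChar
  fun_prop

theorem integral_cexp_int_mul_div (hL : L ≠ 0) {k : ℤ} (hk : k ≠ 0) :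
    ∫ x in (0 : ℝ)..(2 * π * L), Complex.exp (Complex.I * (k * x / L)) = 0 := by
  have hL' : (L : ℂ) ≠ 0 := mod_cast hL
  have h_rate : Complex.I * k / L ≠ 0 :=
    div_ne_zero (mul_ne_zero Complex.I_ne_zero (mod_cast hk)) hL'
  have h_period : Complex.I * k / L * (2 * π * L : ℝ) = k * (2 * π * Complex.I) := by
    push_cast
    field_simp
  calc _ = ∫ x in (0 : ℝ)..(2 * π * L), Complex.exp (Complex.I * k / L * x) := by
        congr 1 with x
        ring_nf
    _ = 0 := by
        rw [integral_exp_mul_complex h_rate, h_period, Complex.exp_int_mul_two_pi_mul_I]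
        simp

theorem integral_torusChar (hL : L ≠ 0) (hM : M ≠ 0) (n : ℤ × ℤ) :
    ∫ x₂ in (0 : ℝ)..(2 * π * M), ∫ x₁ in (0 : ℝ)..(2 * π * L), torusChar L M n x₁ x₂ =
      if n = 0 then ((2 * π * L * (2 * π * M) : ℝ) : ℂ) else 0 := by
  split_ifs with hn
  · simp [hn, torusChar_zero]
    ring
  · simp_rw [torusChar, mul_add, Complex.exp_add, intervalIntegral.integral_mul_const,
      intervalIntegral.integral_const_mul]
    by_cases h₁ : n.1 = 0
    · have h₂ : n.2 ≠ 0 := fun h₂ => hn (Prod.ext h₁ h₂)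
      rw [integral_cexp_int_mul_div hM h₂, mul_zero]
    · rw [integral_cexp_int_mul_div hL h₁, zero_mul]

theorem integral_integral_finsetSum {ι E : Type*} [NormedAddCommGroup E] [NormedSpace ℝ E]
    {T : Finset ι} {f : ι → ℝ → ℝ → E} (hf : ∀ i ∈ T, Continuous (Function.uncurry (f i)))
    (a b c d : ℝ) :
    ∫ y in c..d, ∫ x in a..b, ∑ i ∈ T, f i x y = ∑ i ∈ T, ∫ y in c..d, ∫ x in a..b, f i x y := by
  have h_inner (y : ℝ) : ∫ x in a..b, ∑ i ∈ T, f i x y = ∑ i ∈ T, ∫ x in a..b, f i x y :=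
    intervalIntegral.integral_finsetSum fun i hi =>
      ((hf i hi).comp (Continuous.prodMk_left y)).intervalIntegrable _ _
  simp_rw [h_inner]
  refine intervalIntegral.integral_finsetSum fun i hi => Continuous.intervalIntegrable ?_ _ _
  have h_swap : Continuous (Function.uncurry fun y x => f i x y) := (hf i hi).comp continuous_swap
  exact intervalIntegral.continuous_parametric_intervalIntegral_of_continuous' h_swap a b

theorem integral_norm_sq_sum_mul_torusChar (hL : L ≠ 0) (hM : M ≠ 0) (S : Finset (ℤ × ℤ))
    (b : ℤ × ℤ → ℂ) :
    ∫ x₂ in (0 : ℝ)..(2 * π * M), ∫ x₁ in (0 : ℝ)..(2 * π * L),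
        ‖∑ k ∈ S, b k * torusChar L M k x₁ x₂‖ ^ 2 =
      2 * π * L * (2 * π * M) * ∑ k ∈ S, ‖b k‖ ^ 2 := by
  have h_expand (x₁ x₂ : ℝ) : ((‖∑ k ∈ S, b k * torusChar L M k x₁ x₂‖ ^ 2 : ℝ) : ℂ) =
      ∑ p ∈ S ×ˢ S, b p.1 * starRingEnd ℂ (b p.2) * torusChar L M (p.1 - p.2) x₁ x₂ := by
    rw [Complex.ofReal_pow, ← Complex.mul_conj', map_sum, Finset.sum_mul_sum, Finset.sum_product]
    refine Finset.sum_congr rfl fun k _ => Finset.sum_congr rfl fun l _ => ?_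
    rw [map_mul, mul_mul_mul_comm, torusChar_mul_conj]
  apply Complex.ofReal_injective
  simp_rw [← intervalIntegral.integral_ofReal, h_expand]
  rw [integral_integral_finsetSum fun p _ => (continuous_torusChar L M _).const_mul _]
  simp_rw [intervalIntegral.integral_const_mul, integral_torusChar hL hM, sub_eq_zero, mul_ite,
    mul_zero, Finset.sum_product, Finset.sum_ite_eq]
  rw [Finset.sum_ite_mem, Finset.inter_self, ← Finset.sum_mul, mul_comm]
  simp_rw [Complex.mul_conj']
  push_cast
  rfl

theorem torusSymbol_add_torusSymbol (L M : ℝ) (n m : ℤ × ℤ) :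
    torusSymbol L M n + torusSymbol L M m =
      2 * ((n.1 / L - (n + m).1 / L / 2) ^ 2 + (n.2 / M - (n + m).2 / M / 2) ^ 2) +
        torusSymbol L M (n + m) / 2 := by
  simp only [torusSymbol, Prod.fst_add, Prod.snd_add, Int.cast_add]
  ring

theorem abs_le_of_sqrt_torusSymbol_le {N : ℝ} {n : ℤ × ℤ} (hn : √(torusSymbol L M n) ≤ N) :
    |n.1 / L| ≤ N ∧ |n.2 / M| ≤ N :=
  ⟨(abs_le_sqrt (le_add_of_nonneg_right (sq_nonneg _))).trans hn,
    (abs_le_sqrt (le_add_of_nonneg_left (sq_nonneg _))).trans hn⟩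

theorem sum_pair_inv_one_add_sq_le (hL : 0 < L) (hM : 0 < M) {N K : ℝ}
    (hKL : max 1 N ≤ K * L) (hKM : max 1 N ≤ K * M) {S : Finset (ℤ × ℤ)}
    (hS : ∀ n ∈ S, √(torusSymbol L M n) ≤ N) (k : ℤ × ℤ) (τ : ℝ) :
    ∑ P ∈ S ×ˢ S with P.1 + P.2 = k,
        (1 + (τ - (torusSymbol L M P.1 + torusSymbol L M P.2)) ^ 2)⁻¹ ≤
      π ^ 2 * (1 + (4 * (K ^ 2 + 2 * K)) ^ 2) * (L * M) := by
  set U := (S ×ˢ S).filter fun P => P.1 + P.2 = k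
  have hU : ∀ P ∈ U, (P.1 ∈ S ∧ P.2 ∈ S) ∧ P.1 + P.2 = k := fun P hP => by
    rwa [Finset.mem_filter, Finset.mem_product] at hP
  have h_inj : Set.InjOn Prod.fst (U : Set ((ℤ × ℤ) × (ℤ × ℤ))) := fun P hP P' hP' h =>
    Prod.ext h (add_left_cancel (((hU P hP).2.trans (hU P' hP').2.symm).trans (by rw [h])))
  have h_half {p q R : ℝ} (hp : |p| ≤ N) (hq : |q| ≤ N) (hR : max 1 N ≤ R) :
      |p - (p + q) / 2| ≤ R := by
    have hp' := abs_le.1 hp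
    have hq' := abs_le.1 hq
    have hN := (le_max_right 1 N).trans hR
    rw [abs_le]
    constructor <;> linarith [hp'.1, hp'.2, hq'.1, hq'.2]
  have h_box : ∀ n ∈ U.image Prod.fst,
      |n.1 / L - k.1 / L / 2| ≤ K * L ∧ |n.2 / M - k.2 / M / 2| ≤ K * M := by
    intro n hn
    obtain ⟨P, hP, rfl⟩ := Finset.mem_image.1 hn
    obtain ⟨⟨h₁, h₂⟩, rfl⟩ := hU P hP
    have h₁ := abs_le_of_sqrt_torusSymbol_le (hS _ h₁)
    have h₂ := abs_le_of_sqrt_torusSymbol_le (hS _ h₂)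
    simp only [Prod.fst_add, Prod.snd_add, Int.cast_add, add_div _ _ L, add_div _ _ M]
    exact ⟨h_half h₁.1 h₂.1 hKL, h_half h₁.2 h₂.2 hKM⟩
  have h_lattice := sum_lattice_inv_one_add_sq_le hL hM ((le_max_left 1 N).trans hKL)
    ((le_max_left 1 N).trans hKM) (c := (k.1 / L / 2, k.2 / M / 2)) h_box
    (τ - torusSymbol L M k / 2)
  rw [Finset.sum_image h_inj] at h_lattice
  refine (Finset.sum_congr rfl fun P hP => ?_).trans_le h_lattice
  rw [torusSymbol_add_torusSymbol, (hU P hP).2, sub_sq_comm]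
  ring_nf

theorem freeWave_eq_sum_cexp (L M : ℝ) (a : ℤ × ℤ →₀ ℂ) (t x₁ x₂ : ℝ) :
    freeWave L M a t x₁ x₂ = ∑ n ∈ a.support,
      a n * Complex.exp (Complex.I * (n.1 * x₁ / L + n.2 * x₂ / M - torusSymbol L M n * t)) := by
  refine Finset.sum_congr rfl fun n _ => ?_
  rw [torusChar, mul_assoc, ← Complex.exp_add]
  ring_nf

theorem freeWave_sq (L M : ℝ) (a : ℤ × ℤ →₀ ℂ) (t x₁ x₂ : ℝ) :
    freeWave L M a t x₁ x₂ ^ 2 =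
      ∑ k ∈ (a.support ×ˢ a.support).image (fun P => P.1 + P.2),
        freeWaveSqCoeff L M a k t * torusChar L M k x₁ x₂ := by
  have h_term (n m : ℤ × ℤ) :
      a n * Complex.exp (-(Complex.I * torusSymbol L M n * t)) * torusChar L M n x₁ x₂ *
        (a m * Complex.exp (-(Complex.I * torusSymbol L M m * t)) * torusChar L M m x₁ x₂) =
      a n * a m * Complex.exp (-(Complex.I * (torusSymbol L M n + torusSymbol L M m : ℝ) * t)) *
        torusChar L M (n + m) x₁ x₂ := by
    rw [torusChar_add, Complex.ofReal_add, mul_add, add_mul, neg_add, Complex.exp_add]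
    ring
  rw [sq, freeWave, Finset.sum_mul_sum, ← Finset.sum_product',
    ← Finset.sum_fiberwise_of_maps_to (g := fun P : (ℤ × ℤ) × (ℤ × ℤ) => P.1 + P.2)
      fun P hP => Finset.mem_image_of_mem _ hP]
  refine Finset.sum_congr rfl fun k _ => ?_
  rw [freeWaveSqCoeff, Finset.sum_mul]
  refine Finset.sum_congr rfl fun P hP => ?_
  rw [h_term, (Finset.mem_filter.1 hP).2]

theorem continuous_freeWaveSqCoeff (L M : ℝ) (a : ℤ × ℤ →₀ ℂ) (k : ℤ × ℤ) :
    Continuous (freeWaveSqCoeff L M a k) := by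
  unfold freeWaveSqCoeff
  fun_prop

theorem integral_norm_freeWave_sq (hL : L ≠ 0) (hM : M ≠ 0) (a : ℤ × ℤ →₀ ℂ) (t : ℝ) :
    ∫ x₂ in (0 : ℝ)..(2 * π * M), ∫ x₁ in (0 : ℝ)..(2 * π * L), ‖freeWave L M a t x₁ x₂‖ ^ 2 =
      2 * π * L * (2 * π * M) * ∑ n ∈ a.support, ‖a n‖ ^ 2 := by
  simp_rw [freeWave, integral_norm_sq_sum_mul_torusChar hL hM, norm_mul, Complex.norm_exp]
  simp

theorem integral_norm_freeWave_pow_four (hL : L ≠ 0) (hM : M ≠ 0) (a : ℤ × ℤ →₀ ℂ) (t : ℝ) :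
    ∫ x₂ in (0 : ℝ)..(2 * π * M), ∫ x₁ in (0 : ℝ)..(2 * π * L), ‖freeWave L M a t x₁ x₂‖ ^ 4 =
      2 * π * L * (2 * π * M) * ∑ k ∈ (a.support ×ˢ a.support).image (fun P => P.1 + P.2),
        ‖freeWaveSqCoeff L M a k t‖ ^ 2 := by
  have h_pow (z : ℂ) : ‖z‖ ^ 4 = ‖z ^ 2‖ ^ 2 := by rw [norm_pow, ← pow_mul]
  simp_rw [h_pow, freeWave_sq, integral_norm_sq_sum_mul_torusChar hL hM]

theorem sum_integral_norm_freeWaveSqCoeff_sq_le (hL : 0 < L) (hM : 0 < M) {N K : ℝ}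
    (hKL : max 1 N ≤ K * L) (hKM : max 1 N ≤ K * M) {a : ℤ × ℤ →₀ ℂ}
    (ha : ∀ n ∈ a.support, √(torusSymbol L M n) ≤ N) :
    ∑ k ∈ (a.support ×ˢ a.support).image (fun P => P.1 + P.2),
        ∫ t in (0 : ℝ)..1, ‖freeWaveSqCoeff L M a k t‖ ^ 2 ≤
      2 * exp 1 * (π ^ 2 * (1 + (4 * (K ^ 2 + 2 * K)) ^ 2) * (L * M)) *
        (∑ n ∈ a.support, ‖a n‖ ^ 2) ^ 2 := by
  have h_fiber (k : ℤ × ℤ) := integral_norm_sq_sum_mul_cexp_le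
    ((a.support ×ˢ a.support).filter fun P => P.1 + P.2 = k) (fun P => a P.1 * a P.2)
    (fun P => torusSymbol L M P.1 + torusSymbol L M P.2)
    fun P _ => sum_pair_inv_one_add_sq_le hL hM hKL hKM ha k _
  refine (Finset.sum_le_sum fun k _ => h_fiber k).trans_eq ?_
  rw [← Finset.mul_sum,
    Finset.sum_fiberwise_of_maps_to (g := fun P : (ℤ × ℤ) × (ℤ × ℤ) => P.1 + P.2)
      fun P hP => Finset.mem_image_of_mem _ hP,
    sq (∑ n ∈ a.support, _), Finset.sum_mul_sum, ← Finset.sum_product']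
  simp_rw [norm_mul, mul_pow]

theorem integral_norm_freeWave_pow_four_le (hL : 0 < L) (hM : 0 < M) {N K : ℝ}
    (hKL : max 1 N ≤ K * L) (hKM : max 1 N ≤ K * M) {a : ℤ × ℤ →₀ ℂ}
    (ha : ∀ n ∈ a.support, √(torusSymbol L M n) ≤ N) :
    ∫ t in (0 : ℝ)..1, ∫ x₂ in (0 : ℝ)..(2 * π * M), ∫ x₁ in (0 : ℝ)..(2 * π * L),
        ‖freeWave L M a t x₁ x₂‖ ^ 4 ≤
      exp 1 / 2 * (1 + (4 * (K ^ 2 + 2 * K)) ^ 2) *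
        (∫ x₂ in (0 : ℝ)..(2 * π * M), ∫ x₁ in (0 : ℝ)..(2 * π * L),
          ‖freeWave L M a 0 x₁ x₂‖ ^ 2) ^ 2 := by
  simp_rw [integral_norm_freeWave_pow_four hL.ne' hM.ne', integral_norm_freeWave_sq hL.ne' hM.ne']
  have h_int (k : ℤ × ℤ) :
      IntervalIntegrable (fun t => ‖freeWaveSqCoeff L M a k t‖ ^ 2) volume 0 1 :=
    ((continuous_freeWaveSqCoeff L M a k).norm.pow 2).intervalIntegrable _ _
  rw [intervalIntegral.integral_const_mul, intervalIntegral.integral_finsetSum fun k _ => h_int k]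
  refine (mul_le_mul_of_nonneg_left (sum_integral_norm_freeWaveSqCoeff_sq_le hL hM hKL hKM ha)
    (by positivity)).trans_eq ?_
  ring

end Torus

theorem L4_strichartz_2d_lossless_general (K : ℝ) :
    ∃ C : ℝ, 0 < C ∧
      ∀ L M N : ℝ, 0 < L → 0 < M → max 1 N ≤ K * L → max 1 N ≤ K * M →
      ∀ a : ℤ × ℤ →₀ ℂ, (∀ n ∈ a.support, √(torusSymbol L M n) ≤ N) →
        (∫ t in (0 : ℝ)..1, ∫ x₂ in (0 : ℝ)..(2 * π * M), ∫ x₁ in (0 : ℝ)..(2 * π * L),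
            ‖freeWave L M a t x₁ x₂‖ ^ 4) ^ ((1 : ℝ) / 4) ≤
          C * (∫ x₂ in (0 : ℝ)..(2 * π * M), ∫ x₁ in (0 : ℝ)..(2 * π * L),
            ‖freeWave L M a 0 x₁ x₂‖ ^ 2) ^ ((1 : ℝ) / 2) := by
  set A : ℝ := exp 1 / 2 * (1 + (4 * (K ^ 2 + 2 * K)) ^ 2)
  have hA : 0 < A := by positivity
  refine ⟨A ^ ((1 : ℝ) / 4), by positivity, fun L M N hL hM hKL hKM a ha => ?_⟩
  set E : ℝ := ∫ x₂ in (0 : ℝ)..(2 * π * M), ∫ x₁ in (0 : ℝ)..(2 * π * L),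
    ‖freeWave L M a 0 x₁ x₂‖ ^ 2 with hE
  have hE_nonneg : 0 ≤ E := by
    rw [hE, integral_norm_freeWave_sq hL.ne' hM.ne']
    positivity
  calc _ ≤ (A * E ^ 2) ^ ((1 : ℝ) / 4) := by
        refine rpow_le_rpow ?_ (integral_norm_freeWave_pow_four_le hL hM hKL hKM ha) (by norm_num)
        simp_rw [integral_norm_freeWave_pow_four hL.ne' hM.ne']
        exact intervalIntegral.integral_nonneg zero_le_one fun t _ => by positivity
    _ = A ^ ((1 : ℝ) / 4) * E ^ ((1 : ℝ) / 2) := by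
        rw [mul_rpow hA.le (by positivity), ← rpow_natCast_mul hE_nonneg]
        norm_num

/-- Lossless `L⁴` Strichartz estimate on the unit time interval for the rescaled
(possibly irrational) torus `𝕋²_λ = (ℝ/2πλℤ) × (ℝ/2πγλℤ)`, for free Schrödinger waves
with frequencies `κ(n) = (n₁/λ, n₂/(γλ))` of size at most `N ≤ λ`, uniformly in
`γ ∈ (1/2, 1]`. -/
theorem L4_strichartz_2d_lossless :
    ∃ C : ℝ, 0 < C ∧
      ∀ (γ lam N : ℝ), γ ∈ Set.Ioc (1/2 : ℝ) 1 → 1 ≤ lam → 1 ≤ N → N ≤ lam →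
      ∀ (a : ℤ × ℤ →₀ ℂ),
        (∀ n : ℤ × ℤ,
          ¬ Real.sqrt (((n.1 : ℝ) / lam) ^ 2 + ((n.2 : ℝ) / (γ * lam)) ^ 2) ≤ N → a n = 0) →
      ∀ (u : ℝ → ℝ → ℝ → ℂ),
        (∀ t x₁ x₂ : ℝ, u t x₁ x₂ = ∑ n ∈ a.support, a n *
          Complex.exp (Complex.I *
            ((n.1 : ℂ) * (x₁ : ℂ) / (lam : ℂ)
              + (n.2 : ℂ) * (x₂ : ℂ) / ((γ : ℂ) * (lam : ℂ))
              - ((((n.1 : ℝ) / lam) ^ 2 + ((n.2 : ℝ) / (γ * lam)) ^ 2 : ℝ) : ℂ)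
                  * (t : ℂ)))) →
        (∫ t in (0:ℝ)..1, ∫ x₂ in (0:ℝ)..(2 * π * γ * lam), ∫ x₁ in (0:ℝ)..(2 * π * lam),
            ‖u t x₁ x₂‖ ^ 4) ^ ((1:ℝ)/4) ≤
          C * (∫ x₂ in (0:ℝ)..(2 * π * γ * lam), ∫ x₁ in (0:ℝ)..(2 * π * lam),
            ‖u 0 x₁ x₂‖ ^ 2) ^ ((1:ℝ)/2) := by
  obtain ⟨C, hC, h_general⟩ := L4_strichartz_2d_lossless_general 2
  refine ⟨C, hC, fun γ lam N hγ hlam _ hN a ha u hu => ?_⟩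
  have h_wave : u = freeWave lam (γ * lam) a := by
    funext t x₁ x₂
    rw [hu, freeWave_eq_sum_cexp, Complex.ofReal_mul]
    rfl
  rw [h_wave, mul_assoc (2 * π)]
  refine h_general lam (γ * lam) N (by linarith) (by nlinarith [hγ.1])
    (max_le (by linarith) (by linarith)) (max_le (by nlinarith [hγ.1]) (by nlinarith [hγ.1])) a
    fun n hn => not_not.1 fun h => Finsupp.mem_support_iff.1 hn (ha n h)
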